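/- Let X = (1/√3)(e₁ + e₃ + e₅) and Y = (1/√3)(e₂ + e₄ − e₆), elements of 𝔰𝔲(3). Then [X,Y] = 0, and the set {(u,v) ∈ ℝ² : exp(uX)·exp(vY) is a diagonal matrix} (where exp denotes the matrix exponential) equals the lattice Λ = {m·(√2·π, √2·π/√3) + n·(0, 2√2·π/√3) : m, n ∈ ℤ}. (Consequently the totally geodesic J-holomorphic torus in nearly Kähler F(ℂ³) is isometric to ℝ²/Λ.) -/

import Mathlib

/-!
`√6 X = A` and `√6 Y = i B` for real matrices `A`, `B` with `AB = BA = A`, `B² = 2 - B` and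
`A² = -2 - B`. They are therefore simultaneously diagonalised by three orthogonal idempotents:
`P w` and `P (-w)` with `w = i√3`, and `P0`. With `x = iu/√2` and `t = iv/√6`,
`uX` has eigenvalues `x, -x, 0` and `vY` has eigenvalues `t, t, -2t`, so
`exp(uX) exp(vY) = e^{x+t} P(w) + e^{t-x} P(-w) + e^{-2t} P0`.
Comparing the entries `(0,1)` and `(1,0)`, this is diagonal iff the three eigenvalues agree (and then
it is scalar), that is, iff `e^{2x} = 1` and `e^{x+3t} = 1`; these two conditions cut out the lattice.
-/

/- Setup: `𝔰𝔲(3)` with the basis vectors `e₁,…,e₆` of `𝔭` as in the paper;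
`X = (1/√3)(e₁+e₃+e₅)`, `Y = (1/√3)(e₂+e₄−e₆)` span the tangent space of the
totally geodesic torus of the nearly Kähler flag manifold `F(ℂ³)`. -/

noncomputable section
open Matrix

abbrev M3 := Matrix (Fin 3) (Fin 3) ℂ

def e1 : M3 := (Real.sqrt 2)⁻¹ • !![0, 1, 0; -1, 0, 0; 0, 0, 0]
def e2 : M3 := (Real.sqrt 2)⁻¹ • !![0, Complex.I, 0; Complex.I, 0, 0; 0, 0, 0]
def e3 : M3 := (Real.sqrt 2)⁻¹ • !![0, 0, 0; 0, 0, 1; 0, -1, 0]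
def e4 : M3 := (Real.sqrt 2)⁻¹ • !![0, 0, 0; 0, 0, Complex.I; 0, Complex.I, 0]
def e5 : M3 := (Real.sqrt 2)⁻¹ • !![0, 0, 1; 0, 0, 0; -1, 0, 0]
def e6 : M3 := (Real.sqrt 2)⁻¹ • !![0, 0, Complex.I; 0, 0, 0; Complex.I, 0, 0]

/-- the matrix exponential `exp A = ∑ Aⁿ/n!`. -/
def matExp (A : M3) : M3 := ∑' n : ℕ, ((n.factorial : ℝ)⁻¹) • A ^ n

def Xv : M3 := (Real.sqrt 3)⁻¹ • (e1 + e3 + e5)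
def Yv : M3 := (Real.sqrt 3)⁻¹ • (e2 + e4 - e6)

/-- the lattice `Λ = ℤ·(√2π, √2π/√3) + ℤ·(0, 2√2π/√3)` in `ℝ²`. -/
def latticeL : Set (ℝ × ℝ) :=
  {w | ∃ m n : ℤ, w = m • ((Real.sqrt 2 * Real.pi, Real.sqrt 2 * Real.pi / Real.sqrt 3) : ℝ × ℝ)
      + n • ((0, 2 * Real.sqrt 2 * Real.pi / Real.sqrt 3) : ℝ × ℝ)}

/-- The power series of `exp` evaluated on a combination of three complete orthogonal idempotents. -/
lemma matExp_of_idem (P Q R : M3) (hPP : P * P = P) (hQQ : Q * Q = Q) (hRR : R * R = R)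
    (hPQ : P * Q = 0) (hQP : Q * P = 0) (hPR : P * R = 0) (hRP : R * P = 0)
    (hQR : Q * R = 0) (hRQ : R * Q = 0) (h1 : P + Q + R = 1) (a b c : ℂ) :
    matExp (a • P + b • Q + c • R)
      = Complex.exp a • P + Complex.exp b • Q + Complex.exp c • R := by
  have hpow : ∀ n : ℕ, (a • P + b • Q + c • R) ^ n = a ^ n • P + b ^ n • Q + c ^ n • R := by
    intro n
    induction n with
    | zero => simp [h1]
    | succ n ih =>
      rw [pow_succ, ih]
      simp [add_mul, mul_add, hPP, hQQ, hRR, hPQ, hQP, hPR, hRP, hQR, hRQ, smul_smul, pow_succ,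
        mul_comm]
  have hs : ∀ z : ℂ, HasSum (fun n : ℕ => ((n.factorial : ℝ)⁻¹) • z ^ n) (Complex.exp z) := by
    intro z
    rw [Complex.exp_eq_exp_ℂ]
    exact NormedSpace.exp_series_hasSum_exp' (𝕂 := ℝ) z
  unfold matExp
  refine HasSum.tsum_eq ?_
  have h := (((hs a).smul_const P).add ((hs b).smul_const Q)).add ((hs c).smul_const R)
  refine h.congr_fun ?_
  intro n
  rw [hpow]
  simp only [smul_add, smul_assoc]

/-- For `w² = -3`, the projection onto the common eigenvector of `A` (eigenvalue `w`) and `B`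
(eigenvalue `1`), namely `(B + 2 - wA) / 6`. -/
def P (w : ℂ) : M3 :=
  !![2 / 6, (1 - w) / 6, (-1 - w) / 6; (1 + w) / 6, 2 / 6, (1 - w) / 6;
    (-1 + w) / 6, (1 + w) / 6, 2 / 6]

/-- The projection `(1 - B) / 3` onto the common eigenvector with eigenvalues `0` of `A` and
`-2` of `B`. -/
def P0 : M3 := !![1 / 3, -1 / 3, 1 / 3; -1 / 3, 1 / 3, -1 / 3; 1 / 3, -1 / 3, 1 / 3]

lemma P_mul_self {w : ℂ} (hw : w ^ 2 = -3) : P w * P w = P w := by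
  ext i j
  fin_cases i <;> fin_cases j <;> simp [P, Matrix.mul_apply, Fin.sum_univ_three] <;> grind

lemma P_mul_neg {w : ℂ} (hw : w ^ 2 = -3) : P w * P (-w) = 0 := by
  ext i j
  fin_cases i <;> fin_cases j <;> simp [P, Matrix.mul_apply, Fin.sum_univ_three] <;> grind

lemma P_mul_P0 (w : ℂ) : P w * P0 = 0 := by
  ext i j
  fin_cases i <;> fin_cases j <;> simp [P, P0, Matrix.mul_apply, Fin.sum_univ_three] <;> ring

lemma P0_mul_P (w : ℂ) : P0 * P w = 0 := by
  ext i j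
  fin_cases i <;> fin_cases j <;> simp [P, P0, Matrix.mul_apply, Fin.sum_univ_three] <;> ring

lemma P0_mul_self : P0 * P0 = P0 := by
  ext i j
  fin_cases i <;> fin_cases j <;> simp [P0, Matrix.mul_apply, Fin.sum_univ_three] <;> norm_num

lemma P_add (w : ℂ) : P w + P (-w) + P0 = 1 := by
  ext i j
  fin_cases i <;> fin_cases j <;> simp [P, P0] <;> ring

lemma matExp_P {w : ℂ} (hw : w ^ 2 = -3) (a b c : ℂ) :
    matExp (a • P w + b • P (-w) + c • P0)
      = Complex.exp a • P w + Complex.exp b • P (-w) + Complex.exp c • P0 := by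
  have hw' : (-w) ^ 2 = -3 := by simpa using hw
  have h := P_mul_neg hw'
  rw [neg_neg] at h
  exact matExp_of_idem _ _ _ (P_mul_self hw) (P_mul_self hw') P0_mul_self (P_mul_neg hw) h
    (P_mul_P0 _) (P0_mul_P _) (P_mul_P0 _) (P0_mul_P _) (P_add w) a b c

lemma P_comb_mul {w : ℂ} (hw : w ^ 2 = -3) (a b c a' b' c' : ℂ) :
    (a • P w + b • P (-w) + c • P0) * (a' • P w + b' • P (-w) + c' • P0)
      = (a * a') • P w + (b * b') • P (-w) + (c * c') • P0 := by
  have hw' : (-w) ^ 2 = -3 := by simpa using hw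
  have h := P_mul_neg hw'
  rw [neg_neg] at h
  simp [add_mul, mul_add, P_mul_self hw, P_mul_self hw', P0_mul_self, P_mul_neg hw, h, P_mul_P0,
    P0_mul_P, smul_smul, mul_comm]

/-- A matrix with the eigenprojections `P w`, `P (-w)`, `P0` is diagonal exactly when it is scalar. -/
lemma P_comb_isDiag {w : ℂ} (hw : w ^ 2 = -3) (a b c : ℂ) :
    (a • P w + b • P (-w) + c • P0).IsDiag ↔ a = b ∧ a = c := by
  constructor
  · intro h
    have h01 := h (show (0 : Fin 3) ≠ 1 by decide)
    have h10 := h (show (1 : Fin 3) ≠ 0 by decide)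
    simp [P, P0] at h01 h10
    have hw0 : w ≠ 0 := by rintro rfl; norm_num at hw
    have hab : a = b := by
      refine mul_left_cancel₀ hw0 ?_
      linear_combination 3 * h10 - 3 * h01
    subst hab
    exact ⟨rfl, by linear_combination (3 / 2) * (h10 + h01)⟩
  · rintro ⟨rfl, rfl⟩
    rw [← smul_add, ← smul_add, P_add]
    exact Matrix.isDiag_smul_one _ _

/-- The eigenvalue `i√3` of `A = √6 X`. -/
def w0 : ℂ := Complex.I * (Real.sqrt 3 : ℂ)

lemma ofReal_sqrt_sq {r : ℝ} (hr : 0 ≤ r) : ((Real.sqrt r : ℝ) : ℂ) ^ 2 = (r : ℂ) := by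
  rw [← Complex.ofReal_pow, Real.sq_sqrt hr]

lemma w0_sq : w0 ^ 2 = -3 := by
  rw [w0, mul_pow, Complex.I_sq, ofReal_sqrt_sq (by norm_num)]
  norm_num

lemma ofReal_sqrt_ne {r : ℝ} (hr : 0 < r) : ((Real.sqrt r : ℝ) : ℂ) ≠ 0 :=
  Complex.ofReal_ne_zero.2 (Real.sqrt_ne_zero'.2 hr)

lemma smul_Xv (u : ℝ) :
    u • Xv = ((u / Real.sqrt 2 : ℝ) * Complex.I) • P w0
      + (-((u / Real.sqrt 2 : ℝ) * Complex.I)) • P (-w0) + (0 : ℂ) • P0 := by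
  have h3 := ofReal_sqrt_sq (r := 3) (by norm_num)
  have n3 := ofReal_sqrt_ne (r := 3) (by norm_num)
  have n2 := ofReal_sqrt_ne (r := 2) (by norm_num)
  have hI := Complex.I_sq
  push_cast at h3
  ext i j
  fin_cases i <;> fin_cases j <;> simp [Xv, e1, e3, e5, P, P0, w0] <;> field_simp <;> grind

lemma smul_Yv (v : ℝ) :
    v • Yv = ((v / (Real.sqrt 2 * Real.sqrt 3) : ℝ) * Complex.I) • P w0
      + ((v / (Real.sqrt 2 * Real.sqrt 3) : ℝ) * Complex.I) • P (-w0)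
      + (-2 * ((v / (Real.sqrt 2 * Real.sqrt 3) : ℝ) * Complex.I)) • P0 := by
  have n3 := ofReal_sqrt_ne (r := 3) (by norm_num)
  have n2 := ofReal_sqrt_ne (r := 2) (by norm_num)
  ext i j
  fin_cases i <;> fin_cases j <;> simp [Yv, e2, e4, e6, P, P0] <;> field_simp <;> ring

lemma Xv_comm_Yv : ⁅Xv, Yv⁆ = 0 := by
  have hX := smul_Xv 1
  have hY := smul_Yv 1
  rw [one_smul] at hX hY
  rw [Ring.lie_def, hX, hY, P_comb_mul w0_sq, P_comb_mul w0_sq, sub_eq_zero]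
  simp only [mul_comm]

lemma exp_ofReal_mul_I_eq_one_iff (r : ℝ) :
    Complex.exp (r * Complex.I) = 1 ↔ ∃ n : ℤ, r = n * (2 * Real.pi) := by
  rw [Complex.exp_eq_one_iff]
  refine exists_congr fun n => ?_
  rw [← mul_assoc, mul_left_inj' Complex.I_ne_zero]
  norm_cast

/-- Diagonality of `exp(uX) exp(vY)` as two congruences modulo `2π`. -/
lemma isDiag_iff (u v : ℝ) :
    (matExp (u • Xv) * matExp (v • Yv)).IsDiag ↔
      (∃ m : ℤ, 2 * (u / Real.sqrt 2) = m * (2 * Real.pi)) ∧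
      ∃ k : ℤ, u / Real.sqrt 2 + 3 * (v / (Real.sqrt 2 * Real.sqrt 3)) = k * (2 * Real.pi) := by
  rw [smul_Xv, smul_Yv, matExp_P w0_sq, matExp_P w0_sq, P_comb_mul w0_sq, P_comb_isDiag w0_sq,
    ← exp_ofReal_mul_I_eq_one_iff, ← exp_ofReal_mul_I_eq_one_iff]
  generalize u / Real.sqrt 2 = x
  generalize v / (Real.sqrt 2 * Real.sqrt 3) = t
  simp only [← Complex.exp_add]
  refine and_congr ?_ ?_
  · rw [← div_eq_one_iff_eq (Complex.exp_ne_zero _), ← Complex.exp_sub]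
    push_cast
    ring_nf
  · rw [← div_eq_one_iff_eq (Complex.exp_ne_zero _), ← Complex.exp_sub]
    push_cast
    ring_nf

/-- `[X,Y] = 0`, and `exp(uX)·exp(vY)` is a diagonal matrix
exactly for `(u,v)` in the lattice `Λ`; hence the totally geodesic
`J`-holomorphic torus of nearly Kähler `F(ℂ³)` is isometric to `ℝ²/Λ`. -/
theorem torus_lattice_FC3 :
    ⁅Xv, Yv⁆ = 0 ∧
    {w : ℝ × ℝ | (matExp (w.1 • Xv) * matExp (w.2 • Yv)).IsDiag} = latticeL := by
  refine ⟨Xv_comm_Yv, ?_⟩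
  have n2 : Real.sqrt 2 ≠ 0 := by positivity
  have n3 : Real.sqrt 3 ≠ 0 := by positivity
  have h3 : Real.sqrt 3 ^ 2 = 3 := Real.sq_sqrt (by norm_num)
  ext ⟨u, v⟩
  simp only [Set.mem_ofPred_eq, isDiag_iff, latticeL, Prod.ext_iff, Prod.smul_mk, Prod.mk_add_mk,
    zsmul_eq_mul, mul_zero, add_zero]
  constructor
  · rintro ⟨⟨m, hm⟩, k, hk⟩
    -- `x = mπ` and `x + 3t = 2kπ` give `3t = (m + 2(k - m))π`.
    refine ⟨m, k - m, ?_, ?_⟩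
    · field_simp at hm
      linarith
    · have hx : u / Real.sqrt 2 = m * Real.pi := by linarith
      rw [hx] at hk
      push_cast
      field_simp at hk ⊢
      grind
  · rintro ⟨m, n, rfl, rfl⟩
    refine ⟨⟨m, by field_simp⟩, m + n, ?_⟩
    push_cast
    field_simp
    grind

end
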